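/- Let (W¹,…,W^d) be a d-dimensional standard Brownian motion, V⁰ : [0,T] → (0,∞) continuous, and kᵢ ∈ L²_loc([0,∞)). Then the family Y^ε := (1/ε)(∫₀^T V⁰(t)(exp{ε Mᵗ − ε²⟨M⟩ᵗ/2} ) dt − ∫₀^T V⁰(t) dt), where Mᵗ = Σᵢ ∫₀^t kᵢ(t−s) dWⁱ_s (a Gaussian random variable with variance ⟨M⟩ᵗ = Σᵢ ∫₀^t kᵢ(s)² ds for each fixed t), is bounded in L²(P) uniformly over ε ∈ (0,1], and hence uniformly integrable. -/

import Mathlib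

open MeasureTheory ProbabilityTheory Real

lemma aux_sq {Ω : Type*} [MeasurableSpace Ω] (μ : Measure Ω) [IsProbabilityMeasure μ]
    (X : Ω → ℝ) (hX : Measurable X) (v : ℝ) (hv : 0 ≤ v) (S : ℝ) (hvS : v ≤ S)
    (hlaw : μ.map X = gaussianReal 0 v.toNNReal) (a B : ℝ) (ha : 0 < a) (haB : a ≤ B)
    (ε : ℝ) (hε : 0 < ε) (hε1 : ε ≤ 1) :
    Integrable (fun ω => (1 / ε * (a * exp (ε * X ω - ε ^ 2 * v / 2) - a)) ^ 2) μ ∧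
    ∫ ω, (1 / ε * (a * exp (ε * X ω - ε ^ 2 * v / 2) - a)) ^ 2 ∂μ ≤ B ^ 2 * (S * exp S) := by
  have hint : ∀ c : ℝ, Integrable (fun ω => exp (c * X ω)) μ := by
    intro c
    have h := integrable_exp_mul_gaussianReal (μ := 0) (v := v.toNNReal) c
    rw [← hlaw] at h
    exact h.comp_measurable hX
  have hval : ∀ c : ℝ, ∫ ω, exp (c * X ω) ∂μ = exp (v * c ^ 2 / 2) := by
    intro c
    have h := mgf_gaussianReal hlaw c
    simp only [mgf, Real.coe_toNNReal v hv, zero_mul, zero_add] at h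
    exact h
  have hexp : (fun ω => (1 / ε * (a * exp (ε * X ω - ε ^ 2 * v / 2) - a)) ^ 2) =
      fun ω => (a / ε) ^ 2 * ((exp (- (ε ^ 2 * v)) * exp ((2 * ε) * X ω)
        - (2 * exp (- (ε ^ 2 * v / 2))) * exp (ε * X ω)) + 1) := by
    funext ω
    have e1 : exp (ε * X ω - ε ^ 2 * v / 2) = exp (ε * X ω) * exp (- (ε ^ 2 * v / 2)) := by
      rw [← Real.exp_add]; ring_nf
    have e2 : exp (- (ε ^ 2 * v)) = exp (- (ε ^ 2 * v / 2)) ^ 2 := by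
      rw [← Real.exp_nat_mul]; push_cast; ring_nf
    have e3 : exp ((2 * ε) * X ω) = exp (ε * X ω) ^ 2 := by
      rw [← Real.exp_nat_mul]; push_cast; ring_nf
    rw [e1, e2, e3]; ring
  rw [hexp]
  have i1 := (hint (2 * ε)).const_mul (exp (- (ε ^ 2 * v)))
  have i2 := (hint ε).const_mul (2 * exp (- (ε ^ 2 * v / 2)))
  have i3 : Integrable (fun _ : Ω => (1 : ℝ)) μ := integrable_const _
  refine ⟨((i1.sub i2).add i3).const_mul _, ?_⟩
  have i12 : Integrable (fun ω => exp (- (ε ^ 2 * v)) * exp ((2 * ε) * X ω)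
        - (2 * exp (- (ε ^ 2 * v / 2))) * exp (ε * X ω)) μ := i1.sub i2
  rw [integral_const_mul, integral_add i12 i3, integral_sub i1 i2, integral_const_mul,
    integral_const_mul, hval, hval]
  have f1 : exp (- (ε ^ 2 * v)) * exp (v * (2 * ε) ^ 2 / 2) = exp (ε ^ 2 * v) := by
    rw [← Real.exp_add]; ring_nf
  have f2 : 2 * exp (- (ε ^ 2 * v / 2)) * exp (v * ε ^ 2 / 2) = 2 := by
    rw [mul_assoc, ← Real.exp_add]; ring_nf; simp
  rw [f1, f2]
  simp only [integral_const, probReal_univ, smul_eq_mul, mul_one]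
  have g0 : ε ^ 2 ≤ 1 := by nlinarith
  have gx : ε ^ 2 * v ≤ S := by nlinarith [sq_nonneg ε]
  have g1 : exp (ε ^ 2 * v) - 1 ≤ (ε ^ 2 * v) * exp (ε ^ 2 * v) := by
    have h := Real.add_one_le_exp (-(ε ^ 2 * v))
    have h2 : exp (-(ε ^ 2 * v)) * exp (ε ^ 2 * v) = 1 := by rw [← Real.exp_add]; simp
    nlinarith [Real.exp_pos (ε ^ 2 * v)]
  calc (a / ε) ^ 2 * (exp (ε ^ 2 * v) - 2 + 1)
      ≤ (a / ε) ^ 2 * ((ε ^ 2 * v) * exp (ε ^ 2 * v)) := by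
        gcongr; linarith
    _ = a ^ 2 * (v * exp (ε ^ 2 * v)) := by field_simp
    _ ≤ B ^ 2 * (S * exp S) := by
        have hS0 : 0 ≤ S := hv.trans hvS
        gcongr

lemma aux_cs (T : ℝ) (hT : 0 < T) (f : ℝ → ℝ)
    (hf : Integrable f (volume.restrict (Set.Ioc 0 T)))
    (hf2 : Integrable (fun t => f t ^ 2) (volume.restrict (Set.Ioc 0 T))) :
    (∫ t in Set.Ioc 0 T, f t) ^ 2 ≤ T * ∫ t in Set.Ioc 0 T, f t ^ 2 := by
  set I := ∫ t in Set.Ioc 0 T, f t with hI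
  set J := ∫ t in Set.Ioc 0 T, f t ^ 2 with hJ
  have h : 0 ≤ ∫ t in Set.Ioc 0 T, (f t - I / T) ^ 2 := integral_nonneg fun t => sq_nonneg _
  have e : (fun t => (f t - I / T) ^ 2) =
      fun t => (f t ^ 2 - (2 * (I / T)) * f t) + (I / T) ^ 2 := by funext t; ring
  have i3 : Integrable (fun _ : ℝ => (I / T) ^ 2) (volume.restrict (Set.Ioc 0 T)) :=
    integrable_const _
  have i12 : Integrable (fun t => f t ^ 2 - (2 * (I / T)) * f t)
      (volume.restrict (Set.Ioc 0 T)) := hf2.sub (hf.const_mul _)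
  rw [e, integral_add i12 i3, integral_sub hf2 (hf.const_mul _),
    integral_const_mul, ← hI, ← hJ] at h
  simp only [integral_const, smul_eq_mul, measureReal_restrict_apply_univ, Real.volume_real_Ioc,
    sub_zero, max_eq_left hT.le] at h
  have : J - 2 * (I / T) * I + T * (I / T) ^ 2 = J - I ^ 2 / T := by field_simp; ring
  rw [this, sub_nonneg, div_le_iff₀ hT] at h
  linarith

/-- For the Bergomi-type perturbation, where for each `t` the random
variable `Mᵗ = Σᵢ ∫₀^t kᵢ(t−s)dWⁱ_s` is centered Gaussian with variance
`σ²(t) = Σᵢ ∫₀^t kᵢ(s)² ds`, the family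
`Y^ε = (1/ε)(∫₀^T V⁰(t) exp{εMᵗ − ε²σ²(t)/2} dt − ∫₀^T V⁰(t) dt)` is bounded in `L²(P)`
uniformly over `ε ∈ (0,1]`, and hence uniformly integrable. -/
theorem stmt13 {Ω : Type*} [MeasurableSpace Ω] (μ : Measure Ω) [IsProbabilityMeasure μ]
    (d : ℕ) (T : ℝ) (hT : 0 < T)
    (V0 : ℝ → ℝ) (hV0cont : ContinuousOn V0 (Set.Icc 0 T))
    (hV0pos : ∀ t ∈ Set.Icc 0 T, 0 < V0 t)
    (k : Fin d → ℝ → ℝ)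
    (hk : ∀ i, ∀ R > (0 : ℝ), IntegrableOn (fun s => (k i s) ^ 2) (Set.Icc 0 R))
    (M : ℝ → Ω → ℝ) (hM : Measurable (Function.uncurry M))
    (σ2 : ℝ → ℝ) (hσ2 : ∀ t, σ2 t = ∑ i, ∫ s in Set.Ioc 0 t, (k i s) ^ 2)
    (hlaw : ∀ t ∈ Set.Icc 0 T, μ.map (M t) = gaussianReal 0 (σ2 t).toNNReal)
    (Y : ℝ → Ω → ℝ)
    (hY : ∀ ε ω, Y ε ω = (1 / ε) *
      ((∫ t in Set.Ioc 0 T, V0 t * exp (ε * M t ω - ε ^ 2 * σ2 t / 2)) -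
        ∫ t in Set.Ioc 0 T, V0 t)) :
    (∃ C : ℝ, ∀ ε ∈ Set.Ioc (0 : ℝ) 1, ∫ ω, (Y ε ω) ^ 2 ∂μ ≤ C) ∧
      ∀ δ > (0 : ℝ), ∃ K : ℝ, ∀ ε ∈ Set.Ioc (0 : ℝ) 1,
        ∫ ω in {ω | K ≤ |Y ε ω|}, |Y ε ω| ∂μ ≤ δ := by
  set ν := (volume : Measure ℝ).restrict (Set.Ioc 0 T) with hν
  have hnn : ∀ t, 0 ≤ σ2 t := fun t => by
    rw [hσ2]; exact Finset.sum_nonneg fun i _ => integral_nonneg fun s => sq_nonneg _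
  have hmono : Monotone σ2 := by
    intro a b hab
    rw [hσ2, hσ2]
    refine Finset.sum_le_sum fun i _ => ?_
    refine setIntegral_mono_set ?_ (Filter.Eventually.of_forall fun s => sq_nonneg _)
      (Set.Ioc_subset_Ioc_right hab).eventuallyLE
    refine (hk i (|b| + 1) (by positivity)).mono_set fun x hx => ⟨hx.1.le, ?_⟩
    linarith [hx.2, le_abs_self b]
  obtain ⟨B, hB⟩ := isCompact_Icc.bddAbove_image hV0cont
  have hB' : ∀ t ∈ Set.Icc 0 T, V0 t ≤ B := fun t ht => hB ⟨t, ht, rfl⟩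
  have hV0int : Integrable V0 ν :=
    (hV0cont.integrableOn_Icc (μ := volume)).mono_set Set.Ioc_subset_Icc_self
  set S := σ2 T with hS
  set C1 := B ^ 2 * (S * exp S) with hC1
  have key : ∀ ε ∈ Set.Ioc (0 : ℝ) 1, ∃ G : Ω → ℝ, Integrable G μ ∧ ∫ ω, G ω ∂μ ≤ T * (T * C1) ∧
      (∀ᵐ ω ∂μ, Y ε ω ^ 2 ≤ G ω) ∧ Integrable (Y ε) μ ∧ ∀ ω, 0 ≤ G ω := by
    rintro ε ⟨hε, hε1⟩
    set D : Ω × ℝ → ℝ := fun p =>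
      1 / ε * (V0 p.2 * exp (ε * M p.2 p.1 - ε ^ 2 * σ2 p.2 / 2) - V0 p.2) with hD
    have hmom : ∀ t ∈ Set.Ioc 0 T, Integrable (fun ω => D (ω, t) ^ 2) μ ∧
        ∫ ω, D (ω, t) ^ 2 ∂μ ≤ C1 := by
      intro t ht
      have ht' := Set.Ioc_subset_Icc_self ht
      exact aux_sq μ (M t) (hM.comp measurable_prodMk_left) (σ2 t) (hnn t) S (hmono ht.2)
        (hlaw t ht') (V0 t) B (hV0pos t ht') (hB' t ht') ε hε hε1
    have hDm : AEStronglyMeasurable D (μ.prod ν) := by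
      have m1 : AEStronglyMeasurable (fun p : Ω × ℝ => V0 p.2) (μ.prod ν) :=
        hV0int.aestronglyMeasurable.comp_snd
      have m2 : Measurable (fun p : Ω × ℝ => exp (ε * M p.2 p.1 - ε ^ 2 * σ2 p.2 / 2)) := by
        have a1 : Measurable (fun p : Ω × ℝ => M p.2 p.1) := hM.comp measurable_swap
        have a2 : Measurable (fun p : Ω × ℝ => σ2 p.2) := hmono.measurable.comp measurable_snd
        exact Real.measurable_exp.comp
          ((a1.const_mul ε).sub ((a2.const_mul (ε ^ 2)).div_const 2))
      exact ((m1.mul m2.aestronglyMeasurable).sub m1).const_mul _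
    have hD2 : Integrable (fun p => D p ^ 2) (μ.prod ν) := by
      have hm2 : AEStronglyMeasurable (fun p => D p ^ 2) (μ.prod ν) := hDm.pow 2
      rw [integrable_prod_iff' hm2]
      refine ⟨?_, ?_⟩
      · exact (ae_restrict_iff' measurableSet_Ioc).2
          (Filter.Eventually.of_forall fun t ht => (hmom t ht).1)
      · refine Integrable.mono' (integrable_const C1) hm2.norm.prod_swap.integral_prod_right' ?_
        refine (ae_restrict_iff' measurableSet_Ioc).2
          (Filter.Eventually.of_forall fun t ht => ?_)
        rw [Real.norm_of_nonneg (integral_nonneg fun _ => norm_nonneg _)]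
        simpa using (hmom t ht).2
    have hDi : Integrable D (μ.prod ν) :=
      ((memLp_two_iff_integrable_sq hDm).2 hD2).integrable (by norm_num)
    have hYae : ∀ᵐ ω ∂μ, Y ε ω = ∫ t, D (ω, t) ∂ν := by
      filter_upwards [hDi.prod_right_ae] with ω hω
      have h1 : Integrable (fun t => V0 t * exp (ε * M t ω - ε ^ 2 * σ2 t / 2)) ν := by
        refine ((hω.const_mul ε).add hV0int).congr (Filter.Eventually.of_forall fun t => ?_)
        simp only [hD, Pi.add_apply]
        field_simp
        ring
      rw [hY]
      simp only [hD]
      rw [integral_const_mul, integral_sub h1 hV0int]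
    refine ⟨fun ω => T * ∫ t, D (ω, t) ^ 2 ∂ν, hD2.integral_prod_left.const_mul T, ?_, ?_,
      hDi.integral_prod_left.congr (hYae.mono fun ω h => h.symm), fun ω => ?_⟩
    · rw [integral_const_mul]
      refine mul_le_mul_of_nonneg_left ?_ hT.le
      rw [integral_integral_swap (f := fun ω t => D (ω, t) ^ 2) hD2]
      calc ∫ t, ∫ ω, D (ω, t) ^ 2 ∂μ ∂ν ≤ ∫ t, C1 ∂ν := by
            refine integral_mono_ae hD2.integral_prod_right (integrable_const _) ?_
            exact (ae_restrict_iff' measurableSet_Ioc).2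
              (Filter.Eventually.of_forall fun t ht => (hmom t ht).2)
        _ = T * C1 := by
            simp [hν, Real.volume_real_Ioc, hT.le]
    · filter_upwards [hYae, hDi.prod_right_ae, hD2.prod_right_ae] with ω h1 h2 h3
      rw [h1]
      exact aux_cs T hT _ h2 h3
    · exact mul_nonneg hT.le (integral_nonneg fun t => sq_nonneg _)
  refine ⟨⟨T * (T * C1), fun ε hε => ?_⟩, fun δ hδ => ?_⟩
  · obtain ⟨G, hG, hGC, hYG, -, -⟩ := key ε hε
    exact (integral_mono_of_nonneg (Filter.Eventually.of_forall fun ω => sq_nonneg _) hG hYG).trans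
      hGC
  · have hC0 : 0 ≤ T * (T * C1) := by
      have := hnn T
      positivity
    set K := T * (T * C1) / δ + 1 with hK
    have hK0 : 0 < K := by positivity
    refine ⟨K, fun ε hε => ?_⟩
    obtain ⟨G, hG, hGC, hYG, hYi, hG0⟩ := key ε hε
    have hA : NullMeasurableSet {ω | K ≤ |Y ε ω|} μ :=
      nullMeasurableSet_le aemeasurable_const hYi.abs.aemeasurable
    calc ∫ ω in {ω | K ≤ |Y ε ω|}, |Y ε ω| ∂μ
        ≤ ∫ ω in {ω | K ≤ |Y ε ω|}, G ω / K ∂μ := by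
          refine integral_mono_ae hYi.abs.integrableOn (hG.div_const K).integrableOn ?_
          refine (ae_restrict_iff'₀ hA).2 ?_
          filter_upwards [hYG] with ω h1 h2
          rw [le_div_iff₀ hK0]
          have h2' : K ≤ |Y ε ω| := h2
          nlinarith [sq_abs (Y ε ω), abs_nonneg (Y ε ω)]
      _ ≤ ∫ ω, G ω / K ∂μ :=
          setIntegral_le_integral (hG.div_const K)
            (Filter.Eventually.of_forall fun ω => div_nonneg (hG0 ω) hK0.le)
      _ ≤ δ := by
          rw [integral_div, div_le_iff₀ hK0, hK]
          have : δ * (T * (T * C1) / δ + 1) = T * (T * C1) + δ := by field_simp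
          linarith
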